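/- Let F be a field with char F ∉ {2, 3} and let V be an F-vector space of dimension 2. Let L⁴V denote the subspace of T⁴V = V ⊗ V ⊗ V ⊗ V spanned by the left-normed brackets [[[u, v], w], x] for u, v, w, x ∈ V, where [x, y] = x ⊗ y − y ⊗ x, and let S²V denote the subspace of V ⊗ V spanned by the elements v ⊗ w + w ⊗ v. Then there exists a GL(V)-equivariant linear isomorphism Λ²V ⊗ S²V → L⁴V (where g ∈ GL(V) acts on Λ²V ⊗ S²V by (Λ²g) ⊗ (g ⊗ g) and on L⁴V by g ⊗ g ⊗ g ⊗ g); in particular dim L⁴V = 3, and L⁴V is an irreducible GL(V)-module: its only GL(V)-invariant subspaces are {0} and L⁴V. -/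

import Mathlib

/-!
STATEMENT 13: Let `char F ∉ {2, 3}` and `dim V = 2`.  Let `L⁴V ⊆ T⁴V` be the
span of the left-normed brackets `[[[u,v],w],x]` (computed in the tensor
algebra, with `T⁴V` realised as `(V ⊗ V) ⊗ (V ⊗ V)`) and `S²V ⊆ V ⊗ V` the span
of the elements `v ⊗ w + w ⊗ v`.  Then there exists a `GL(V)`-equivariant
linear isomorphism `Λ²V ⊗ S²V ≅ L⁴V` (where `g` acts by `Λ²g ⊗ (g ⊗ g)` on the
source and by `g ⊗ g ⊗ g ⊗ g` on `T⁴V`); in particular `dim L⁴V = 3`, and `L⁴V`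
is an irreducible `GL(V)`-module.
-/

open TensorProduct ExteriorAlgebra

open TensorProduct ExteriorAlgebra

section Ext

variable (F : Type*) {V W : Type*} [Field F] [AddCommGroup V] [Module F V]
  [AddCommGroup W] [Module F W]

/-- The morphism of exterior algebras induced by a linear map sends the `n`-th
exterior power into the `n`-th exterior power. -/
lemma exteriorPower_map_mem (n : ℕ) (f : V →ₗ[F] W) {x : ExteriorAlgebra F V}
    (hx : x ∈ ⋀[F]^n V) : ExteriorAlgebra.map f x ∈ ⋀[F]^n W := by
  rw [← ExteriorAlgebra.ιMulti_span_fixedDegree] at hx ⊢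
  induction hx using Submodule.span_induction with
  | mem y hy =>
      obtain ⟨m, rfl⟩ := hy
      rw [ExteriorAlgebra.map_apply_ιMulti]
      exact Submodule.subset_span ⟨_, rfl⟩
  | zero => simp
  | add a b _ _ h1 h2 => simpa using add_mem h1 h2
  | smul c a _ h => simpa using Submodule.smul_mem _ c h

/-- The linear map `⋀ⁿ f : ⋀ⁿ V → ⋀ⁿ W` induced by a linear map `f : V → W`. -/
noncomputable def extPowMap (n : ℕ) (f : V →ₗ[F] W) : ⋀[F]^n V →ₗ[F] ⋀[F]^n W :=
  (ExteriorAlgebra.map f).toLinearMap.restrict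
    (fun _ hx => exteriorPower_map_mem F n f hx)

/-- The wedge `u ∧ v` as an element of the second exterior power `⋀²V`. -/
noncomputable def wedge2 (u v : V) : ⋀[F]^2 V :=
  ⟨ExteriorAlgebra.ιMulti F 2 ![u, v],
    ExteriorAlgebra.ιMulti_range F 2 (Set.mem_range_self _)⟩

/-- The wedge `u ∧ v ∧ w` as an element of the third exterior power `⋀³V`. -/
noncomputable def wedge3 (u v w : V) : ⋀[F]^3 V :=
  ⟨ExteriorAlgebra.ιMulti F 3 ![u, v, w],
    ExteriorAlgebra.ιMulti_range F 3 (Set.mem_range_self _)⟩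

end Ext

section Defs

variable (F : Type*) {V : Type*} [Field F] [AddCommGroup V] [Module F V]

/-- `[u, w] = u ⊗ w − w ⊗ u ∈ T²V`. -/
noncomputable def br11 (u w : V) : V ⊗[F] V :=
  u ⊗ₜ[F] w - w ⊗ₜ[F] u

/-- `[x, y] = x ⊗ y − y ⊗ x ∈ T³V` for `x ∈ T²V`, `y ∈ V`. -/
noncomputable def br21 (x : V ⊗[F] V) (y : V) : (V ⊗[F] V) ⊗[F] V :=
  x ⊗ₜ[F] y - (TensorProduct.assoc F V V V).symm (y ⊗ₜ[F] x)

/-- The canonical isomorphism `T³V ⊗ V ≃ T⁴V` (with `T⁴V = (V⊗V) ⊗ (V⊗V)`). -/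
noncomputable def e31 : (((V ⊗[F] V) ⊗[F] V) ⊗[F] V) ≃ₗ[F] (V ⊗[F] V) ⊗[F] (V ⊗[F] V) :=
  TensorProduct.assoc F (V ⊗[F] V) V V

/-- The canonical isomorphism `V ⊗ T³V ≃ T⁴V` built from associators. -/
noncomputable def e13 : (V ⊗[F] ((V ⊗[F] V) ⊗[F] V)) ≃ₗ[F] (V ⊗[F] V) ⊗[F] (V ⊗[F] V) :=
  (TensorProduct.assoc F V (V ⊗[F] V) V).symm ≪≫ₗ
    TensorProduct.congr (TensorProduct.assoc F V V V).symm (LinearEquiv.refl F V) ≪≫ₗ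
    TensorProduct.assoc F (V ⊗[F] V) V V

/-- `[z, y] = z ⊗ y − y ⊗ z ∈ T⁴V` for `z ∈ T³V`, `y ∈ V`. -/
noncomputable def br31 (z : (V ⊗[F] V) ⊗[F] V) (y : V) :
    (V ⊗[F] V) ⊗[F] (V ⊗[F] V) :=
  e31 F (z ⊗ₜ[F] y) - e13 F (y ⊗ₜ[F] z)

/-- The Lie power `L⁴V`: the span in `T⁴V` of all `[[[u,v],w],x]`. -/
noncomputable def L4 : Submodule F ((V ⊗[F] V) ⊗[F] (V ⊗[F] V)) :=
  Submodule.span F {t | ∃ u v w x : V, t = br31 F (br21 F (br11 F u v) w) x}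

/-- The symmetric square `S²V`: the span in `V ⊗ V` of all `v ⊗ w + w ⊗ v`. -/
noncomputable def S2 : Submodule F (V ⊗[F] V) :=
  Submodule.span F {x | ∃ v w : V, x = v ⊗ₜ[F] w + w ⊗ₜ[F] v}

/-- The diagonal action `g ⊗ g ⊗ g ⊗ g` on `T⁴V = (V⊗V) ⊗ (V⊗V)`. -/
noncomputable def map4 (g : V →ₗ[F] V) :
    ((V ⊗[F] V) ⊗[F] (V ⊗[F] V)) →ₗ[F] ((V ⊗[F] V) ⊗[F] (V ⊗[F] V)) :=
  TensorProduct.map (TensorProduct.map g g) (TensorProduct.map g g)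

/-- `g ⊗ g` preserves the symmetric square. -/
lemma S2_map_mem (g : V →ₗ[F] V) {x : V ⊗[F] V} (hx : x ∈ S2 F) :
    TensorProduct.map g g x ∈ S2 F (V := V) := by
  induction hx using Submodule.span_induction with
  | mem y hy =>
      obtain ⟨v, w, rfl⟩ := hy
      exact Submodule.subset_span ⟨g v, g w, by simp⟩
  | zero => simp
  | add a b _ _ h1 h2 => simpa using add_mem h1 h2
  | smul c a _ h => simpa using Submodule.smul_mem _ c h

/-- The restriction of `g ⊗ g` to the symmetric square `S²V`. -/
noncomputable def S2map (g : V →ₗ[F] V) : S2 F (V := V) →ₗ[F] S2 F (V := V) :=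
  (TensorProduct.map g g).restrict (fun _ hx => S2_map_mem F g hx)

end Defs

section Aux

variable (F : Type*) {V : Type*} [Field F] [AddCommGroup V] [Module F V]

/-- `br11` as an alternating map. -/
noncomputable def auxAlt : V [⋀^Fin 2]→ₗ[F] (V ⊗[F] V) :=
  { toFun := fun m => br11 F (m 0) (m 1)
    map_update_add' := by
      intro inst m i x y
      rw [Subsingleton.elim inst (instDecidableEqFin 2)]
      fin_cases i <;> simp [br11, TensorProduct.tmul_add, TensorProduct.add_tmul] <;> abel
    map_update_smul' := by
      intro inst m i c x
      rw [Subsingleton.elim inst (instDecidableEqFin 2)]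
      fin_cases i <;> simp [br11, TensorProduct.tmul_smul, TensorProduct.smul_tmul', smul_sub]
    map_eq_zero_of_eq' := by
      intro m i j h hij
      fin_cases i <;> fin_cases j <;> simp_all [br11] }

/-- The embedding of the exterior square into the tensor square. -/
noncomputable def auxBeta : ⋀[F]^2 V →ₗ[F] (V ⊗[F] V) :=
  exteriorPower.alternatingMapLinearEquiv (auxAlt F)

lemma auxBeta_ιMulti (m : Fin 2 → V) :
    auxBeta F (exteriorPower.ιMulti F 2 m) = br11 F (m 0) (m 1) := by
  simp [auxBeta, exteriorPower.alternatingMapLinearEquiv_apply_ιMulti, auxAlt]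

/-- `x ⊗ y ↦ [x, y]`. -/
noncomputable def auxC21 : ((V ⊗[F] V) ⊗[F] V) →ₗ[F] ((V ⊗[F] V) ⊗[F] V) :=
  LinearMap.id - (TensorProduct.assoc F V V V).symm.toLinearMap ∘ₗ
    (TensorProduct.comm F (V ⊗[F] V) V).toLinearMap

/-- `z ⊗ y ↦ [z, y]`. -/
noncomputable def auxC31 : (((V ⊗[F] V) ⊗[F] V) ⊗[F] V) →ₗ[F] ((V ⊗[F] V) ⊗[F] (V ⊗[F] V)) :=
  (e31 F).toLinearMap - (e13 F).toLinearMap ∘ₗ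
    (TensorProduct.comm F ((V ⊗[F] V) ⊗[F] V) V).toLinearMap

/-- `a ⊗ (w ⊗ x) ↦ [[a, w], x]`. -/
noncomputable def auxPsi : ((V ⊗[F] V) ⊗[F] (V ⊗[F] V)) →ₗ[F] ((V ⊗[F] V) ⊗[F] (V ⊗[F] V)) :=
  auxC31 F ∘ₗ (auxC21 F).rTensor V ∘ₗ (TensorProduct.assoc F (V ⊗[F] V) V V).symm.toLinearMap

lemma auxPsi_apply (a : V ⊗[F] V) (w x : V) :
    auxPsi F (a ⊗ₜ (w ⊗ₜ x)) = br31 F (br21 F a w) x := by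
  rfl

lemma auxPsi_pure (u v w x : V) :
    auxPsi F ((u ⊗ₜ v) ⊗ₜ (w ⊗ₜ x)) =
      (u ⊗ₜ[F] v) ⊗ₜ[F] (w ⊗ₜ[F] x) - (w ⊗ₜ[F] u) ⊗ₜ[F] (v ⊗ₜ[F] x)
      - (x ⊗ₜ[F] u) ⊗ₜ[F] (v ⊗ₜ[F] w) + (x ⊗ₜ[F] w) ⊗ₜ[F] (u ⊗ₜ[F] v) := by
  rw [auxPsi_apply]
  simp [br31, br21, e31, e13, TensorProduct.sub_tmul, TensorProduct.tmul_sub]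
  abel

lemma auxPsi_map4 (g : V →ₗ[F] V) (y : (V ⊗[F] V) ⊗[F] (V ⊗[F] V)) :
    auxPsi F (map4 F g y) = map4 F g (auxPsi F y) := by
  have : auxPsi F ∘ₗ map4 F g = map4 F g ∘ₗ auxPsi F := by
    ext u v w x
    simp [map4, auxPsi_pure]
  exact LinearMap.congr_fun this y

lemma auxBeta_map (g : V →ₗ[F] V) (y : ⋀[F]^2 V) :
    auxBeta F (extPowMap F 2 g y) = TensorProduct.map g g (auxBeta F y) := by
  have : auxBeta F ∘ₗ extPowMap F 2 g = TensorProduct.map g g ∘ₗ auxBeta F := by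
    apply exteriorPower.linearMap_ext
    ext m
    have h : extPowMap F 2 g (exteriorPower.ιMulti F 2 m) =
        exteriorPower.ιMulti F 2 (g ∘ m) := by
      apply Subtype.ext
      simp only [extPowMap, exteriorPower.ιMulti_apply_coe]
      exact ExteriorAlgebra.map_apply_ιMulti g m
    simp [h, auxBeta_ιMulti, br11]
  exact LinearMap.congr_fun this y

/-- The equivariant map `Λ² ⊗ S² → T⁴`. -/
noncomputable def auxPhi : ((⋀[F]^2 V) ⊗[F] (S2 F (V := V))) →ₗ[F] ((V ⊗[F] V) ⊗[F] (V ⊗[F] V)) :=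
  auxPsi F ∘ₗ TensorProduct.map (auxBeta F) (S2 F (V := V)).subtype

lemma auxPhi_map (g : V →ₗ[F] V) (y : (⋀[F]^2 V) ⊗[F] (S2 F (V := V))) :
    auxPhi F (TensorProduct.map (extPowMap F 2 g) (S2map F g) y) = map4 F g (auxPhi F y) := by
  simp only [auxPhi, LinearMap.comp_apply]
  rw [← auxPsi_map4]
  congr 1
  induction y using TensorProduct.induction_on with
  | zero => simp
  | add a b h1 h2 => simp [h1, h2]
  | tmul a b => simp [map4, auxBeta_map, S2map]

/-- `[[[p, q], w], x]`. -/
noncomputable def auxM (p q w x : V) : (V ⊗[F] V) ⊗[F] (V ⊗[F] V) :=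
  auxPsi F (br11 F p q ⊗ₜ (w ⊗ₜ x))

lemma auxM_symm (p q : V) : auxM F p q q p = auxM F p q p q := by
  simp only [auxM, br11, TensorProduct.sub_tmul, map_sub, auxPsi_pure]
  abel

lemma auxM_map4 (g : V →ₗ[F] V) (p q w x : V) :
    map4 F g (auxM F p q w x) = auxM F (g p) (g q) (g w) (g x) := by
  rw [auxM, ← auxPsi_map4]
  simp [map4, auxM, br11]

lemma auxM_expand (p q : V) (u0 u1 v0 v1 w0 w1 x0 x1 : F) :
    auxM F (u0 • p + u1 • q) (v0 • p + v1 • q) (w0 • p + w1 • q) (x0 • p + x1 • q) =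
      (u0 * v1 - u1 * v0) • ((w0 * x0) • auxM F p q p p +
        (w0 * x1 + w1 * x0) • auxM F p q p q + (w1 * x1) • auxM F p q q q) := by
  have h1 : br11 F (u0 • p + u1 • q) (v0 • p + v1 • q) = (u0 * v1 - u1 * v0) • br11 F p q := by
    simp only [br11, TensorProduct.tmul_add, TensorProduct.add_tmul, TensorProduct.tmul_smul,
      ← TensorProduct.smul_tmul']
    module
  have h2 := auxM_symm F p q
  simp only [auxM] at h2 ⊢
  rw [h1]
  simp only [TensorProduct.tmul_add, TensorProduct.add_tmul, TensorProduct.tmul_smul,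
      ← TensorProduct.smul_tmul', map_add, map_smul, h2]
  module

lemma L4_eq (b : Module.Basis (Fin 2) F V) :
    L4 F (V := V) = Submodule.span F {auxM F (b 0) (b 1) (b 0) (b 0),
      auxM F (b 0) (b 1) (b 0) (b 1), auxM F (b 0) (b 1) (b 1) (b 1)} := by
  apply le_antisymm
  · refine Submodule.span_le.2 ?_
    rintro t ⟨u, v, w, x, rfl⟩
    rw [← auxPsi_apply]
    change auxM F u v w x ∈ _
    have hb : ∀ v : V, v = b.repr v 0 • b 0 + b.repr v 1 • b 1 := fun v => by
      conv_lhs => rw [← b.sum_repr v, Fin.sum_univ_two]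
    rw [hb u, hb v, hb w, hb x, auxM_expand]
    apply Submodule.smul_mem
    exact Submodule.mem_span_triple.2 ⟨_, _, _, rfl⟩
  · refine Submodule.span_le.2 ?_
    rintro t (rfl | rfl | rfl) <;> rw [auxM, auxPsi_apply] <;>
      exact Submodule.subset_span ⟨_, _, _, _, rfl⟩

lemma auxM_indep (b : Module.Basis (Fin 2) F V) (c0 c1 c2 : F)
    (h : c0 • auxM F (b 0) (b 1) (b 0) (b 0) + c1 • auxM F (b 0) (b 1) (b 0) (b 1) +
      c2 • auxM F (b 0) (b 1) (b 1) (b 1) = 0) : c0 = 0 ∧ c1 = 0 ∧ c2 = 0 := by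
  have key : ∀ i j k l : Fin 2,
      ((b.tensorProduct b).tensorProduct (b.tensorProduct b)).repr
       (c0 • auxM F (b 0) (b 1) (b 0) (b 0) + c1 • auxM F (b 0) (b 1) (b 0) (b 1) +
      c2 • auxM F (b 0) (b 1) (b 1) (b 1)) ((i, j), (k, l)) = 0 := by
    intro i j k l; rw [h]; simp
  have k0 := key 1 0 0 0
  have k1 := key 1 1 0 0
  have k2 := key 0 1 1 1
  simp [auxM, br11, TensorProduct.sub_tmul, auxPsi_pure, Finsupp.single_apply] at k0 k1 k2
  exact ⟨k0, k1, k2⟩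

lemma S2_le (b : Module.Basis (Fin 2) F V) :
    S2 F (V := V) ≤ Submodule.span F {b 0 ⊗ₜ[F] b 0 + b 0 ⊗ₜ[F] b 0,
      b 0 ⊗ₜ[F] b 1 + b 1 ⊗ₜ[F] b 0, b 1 ⊗ₜ[F] b 1 + b 1 ⊗ₜ[F] b 1} := by
  refine Submodule.span_le.2 ?_
  rintro t ⟨v, w, rfl⟩
  have hb : ∀ v : V, v = b.repr v 0 • b 0 + b.repr v 1 • b 1 := fun v => by
    conv_lhs => rw [← b.sum_repr v, Fin.sum_univ_two]
  rw [hb v, hb w]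
  refine Submodule.mem_span_triple.2 ⟨b.repr v 0 * b.repr w 0,
    b.repr v 0 * b.repr w 1 + b.repr v 1 * b.repr w 0, b.repr v 1 * b.repr w 1, ?_⟩
  simp only [TensorProduct.tmul_add, TensorProduct.add_tmul, TensorProduct.tmul_smul,
      ← TensorProduct.smul_tmul']
  module

lemma ext2_span (b : Module.Basis (Fin 2) F V) (y : ⋀[F]^2 V) :
    ∃ c : F, c • exteriorPower.ιMulti F 2 ![b 0, b 1] = y := by
  haveI := Module.Finite.of_basis b
  have hr : Module.finrank F (⋀[F]^2 V) = 1 := by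
    rw [exteriorPower.finrank_eq, Module.finrank_eq_card_basis b]; simp
  refine (finrank_eq_one_iff_of_nonzero' _ ?_).1 hr y
  intro h0
  have h1 := auxBeta_ιMulti F ![b 0, b 1]
  rw [h0] at h1
  have := auxM_indep F b 1 0 0 (by
    simp only [auxM]
    simp at h1
    simp [← h1])
  simp at this

lemma tensor_form (b : Module.Basis (Fin 2) F V) (y : (⋀[F]^2 V) ⊗[F] (S2 F (V := V))) :
    ∃ s : S2 F (V := V), y = exteriorPower.ιMulti F 2 ![b 0, b 1] ⊗ₜ s := by
  induction y using TensorProduct.induction_on with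
  | zero => exact ⟨0, by simp⟩
  | add a c h1 h2 =>
    obtain ⟨s, rfl⟩ := h1
    obtain ⟨t, rfl⟩ := h2
    exact ⟨s + t, by rw [TensorProduct.tmul_add]⟩
  | tmul a s =>
    obtain ⟨c, rfl⟩ := ext2_span F b a
    exact ⟨c • s, by rw [TensorProduct.smul_tmul]⟩

lemma auxPhi_tmul (b : Module.Basis (Fin 2) F V) (s : S2 F (V := V)) :
    auxPhi F (exteriorPower.ιMulti F 2 ![b 0, b 1] ⊗ₜ s) =
      auxPsi F (br11 F (b 0) (b 1) ⊗ₜ (s : V ⊗[F] V)) := by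
  simp [auxPhi, auxBeta_ιMulti]

lemma auxPsi_comb (p q : V) (c0 c1 c2 : F) :
    auxPsi F (br11 F p q ⊗ₜ (c0 • (p ⊗ₜ[F] p + p ⊗ₜ[F] p) + c1 • (p ⊗ₜ[F] q + q ⊗ₜ[F] p)
      + c2 • (q ⊗ₜ[F] q + q ⊗ₜ[F] q))) =
    (2 * c0) • auxM F p q p p + (2 * c1) • auxM F p q p q + (2 * c2) • auxM F p q q q := by
  have h2 := auxM_symm F p q
  simp only [auxM] at h2 ⊢
  simp only [TensorProduct.tmul_add, TensorProduct.tmul_smul, map_add, map_smul, h2]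
  module

lemma auxPhi_inj (h2 : (2 : F) ≠ 0) (b : Module.Basis (Fin 2) F V) :
    Function.Injective (auxPhi F (V := V)) := by
  rw [injective_iff_map_eq_zero]
  intro y hy
  obtain ⟨⟨s, hs⟩, rfl⟩ := tensor_form F b y
  rw [auxPhi_tmul] at hy
  obtain ⟨c0, c1, c2, hc⟩ := Submodule.mem_span_triple.1 (S2_le F b hs)
  simp only [← hc, auxPsi_comb] at hy
  obtain ⟨k0, k1, k2⟩ := auxM_indep F b _ _ _ hy
  simp [h2] at k0 k1 k2
  have : (⟨s, hs⟩ : S2 F (V := V)) = 0 := by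
    apply Subtype.ext
    simp [← hc, k0, k1, k2]
  rw [this, TensorProduct.tmul_zero]

lemma auxPhi_range (h2 : (2 : F) ≠ 0) (b : Module.Basis (Fin 2) F V) :
    LinearMap.range (auxPhi F (V := V)) = L4 F := by
  rw [L4_eq F b]
  apply le_antisymm
  · rintro _ ⟨y, rfl⟩
    obtain ⟨⟨s, hs⟩, rfl⟩ := tensor_form F b y
    rw [auxPhi_tmul]
    obtain ⟨c0, c1, c2, hc⟩ := Submodule.mem_span_triple.1 (S2_le F b hs)
    simp only [← hc, auxPsi_comb]
    exact Submodule.mem_span_triple.2 ⟨_, _, _, rfl⟩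
  · intro t ht
    obtain ⟨c0, c1, c2, rfl⟩ := Submodule.mem_span_triple.1 ht
    have hs : ∀ v w : V, v ⊗ₜ[F] w + w ⊗ₜ[F] v ∈ S2 F := fun v w =>
      Submodule.subset_span ⟨v, w, rfl⟩
    refine ⟨exteriorPower.ιMulti F 2 ![b 0, b 1] ⊗ₜ
      ⟨_, add_mem (add_mem (Submodule.smul_mem _ (c0 / 2) (hs (b 0) (b 0)))
        (Submodule.smul_mem _ (c1 / 2) (hs (b 0) (b 1))))
        (Submodule.smul_mem _ (c2 / 2) (hs (b 1) (b 1)))⟩, ?_⟩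
    rw [auxPhi_tmul]
    simp only [auxPsi_comb]
    field_simp

lemma L4_finrank (b : Module.Basis (Fin 2) F V) : Module.finrank F (L4 F (V := V)) = 3 := by
  have hli : LinearIndependent F ![auxM F (b 0) (b 1) (b 0) (b 0),
      auxM F (b 0) (b 1) (b 0) (b 1), auxM F (b 0) (b 1) (b 1) (b 1)] := by
    rw [Fintype.linearIndependent_iff]
    intro c hc
    simp [Fin.sum_univ_three] at hc
    obtain ⟨k0, k1, k2⟩ := auxM_indep F b _ _ _ hc
    intro i
    fin_cases i <;> assumption
  have := finrank_span_eq_card hli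
  rw [L4_eq F b]
  have hr : Set.range ![auxM F (b 0) (b 1) (b 0) (b 0),
      auxM F (b 0) (b 1) (b 0) (b 1), auxM F (b 0) (b 1) (b 1) (b 1)] =
      {auxM F (b 0) (b 1) (b 0) (b 0),
      auxM F (b 0) (b 1) (b 0) (b 1), auxM F (b 0) (b 1) (b 1) (b 1)} := by
    ext t
    simp
    tauto
  rw [hr] at this
  simpa using this

lemma L4_irred (h2 : (2 : F) ≠ 0) (b : Module.Basis (Fin 2) F V)
    (W : Submodule F ((V ⊗[F] V) ⊗[F] (V ⊗[F] V))) (hW : W ≤ L4 F (V := V))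
    (hg : ∀ g : V ≃ₗ[F] V, ∀ x ∈ W, map4 F g.toLinearMap x ∈ W) :
    W = ⊥ ∨ W = L4 F (V := V) := by
  -- the swap
  let σ : V ≃ₗ[F] V := b.equiv b (Equiv.swap 0 1)
  have σ0 : σ (b 0) = b 1 := by simp [σ]
  have σ1 : σ (b 1) = b 0 := by simp [σ]
  -- the transvection
  have hf : ∃ τ : V ≃ₗ[F] V, τ (b 0) = b 0 ∧ τ (b 1) = b 0 + b 1 := by
    let f : V →ₗ[F] V := b.constr F ![b 0, b 0 + b 1]
    let f' : V →ₗ[F] V := b.constr F ![b 0, b 1 - b 0]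
    have f0 : f (b 0) = b 0 := by simp [f, Module.Basis.constr_basis]
    have f1 : f (b 1) = b 0 + b 1 := by simp [f, Module.Basis.constr_basis]
    have f'0 : f' (b 0) = b 0 := by simp [f', Module.Basis.constr_basis]
    have f'1 : f' (b 1) = b 1 - b 0 := by simp [f', Module.Basis.constr_basis]
    refine ⟨LinearEquiv.ofLinearMap f f' ?_ ?_, f0, f1⟩
    · refine b.ext fun i => ?_
      fin_cases i <;> simp [f0, f1, f'0, f'1]
    · refine b.ext fun i => ?_
      fin_cases i <;> simp [f0, f1, f'0, f'1]
  obtain ⟨τ, τ0, τ1⟩ := hf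
  set A := auxM F (b 0) (b 1) (b 0) (b 0) with hA
  set B := auxM F (b 0) (b 1) (b 0) (b 1) with hB
  set C := auxM F (b 0) (b 1) (b 1) (b 1) with hC
  have σA : map4 F σ.toLinearMap A = -C := by
    rw [hA, auxM_map4]
    have := auxM_expand F (b 0) (b 1) 0 1 1 0 0 1 0 1
    rw [← hC] at this
    have e1 : auxM F (b 1) (b 0) (b 1) (b 1) = (-1 : F) • C := by simpa using this
    change auxM F (σ (b 0)) (σ (b 1)) (σ (b 0)) (σ (b 0)) = -C
    rw [σ0, σ1, e1]
    module
  have τA : map4 F τ.toLinearMap A = A := by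
    rw [hA, auxM_map4]
    have := auxM_expand F (b 0) (b 1) 1 0 1 1 1 0 1 0
    simpa [τ0, τ1, ← hA] using this
  have τB : map4 F τ.toLinearMap B = A + B := by
    rw [hB, auxM_map4]
    have := auxM_expand F (b 0) (b 1) 1 0 1 1 1 0 1 1
    simpa [τ0, τ1, ← hA, ← hB] using this
  have τC : map4 F τ.toLinearMap C = A + (2 : F) • B + C := by
    rw [hC, auxM_map4]
    have := auxM_expand F (b 0) (b 1) 1 0 1 1 1 1 1 1
    simpa [τ0, τ1, ← hA, ← hB, ← hC, one_add_one_eq_two] using this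
  have hn : ∀ x ∈ W, map4 F τ.toLinearMap x - x ∈ W := fun x hx => sub_mem (hg τ x hx) hx
  have cancel : ∀ (c : F) (x), c ≠ 0 → c • x ∈ W → x ∈ W := fun c x hc hx =>
    (Submodule.smul_mem_iff W hc).1 hx
  by_cases hbot : W = ⊥
  · exact Or.inl hbot
  right
  obtain ⟨x, hx, hx0⟩ := (Submodule.ne_bot_iff W).1 hbot
  have hxL := hW hx
  rw [L4_eq F b] at hxL
  obtain ⟨c0, c1, c2, hc⟩ := Submodule.mem_span_triple.1 hxL
  rw [← hA, ← hB, ← hC] at hc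
  have n1 : map4 F τ.toLinearMap x - x = (c1 + c2) • A + (2 * c2) • B := by
    rw [← hc]
    simp only [map_add, map_smul, τA, τB, τC]
    module
  have hx1 := hn x hx
  rw [n1] at hx1
  have hx2 := hn _ hx1
  have n2 : map4 F τ.toLinearMap ((c1 + c2) • A + (2 * c2) • B) - ((c1 + c2) • A + (2 * c2) • B)
      = (2 * c2) • A := by
    simp only [map_add, map_smul, τA, τB]
    module
  rw [n2] at hx2
  have hAW : A ∈ W := by
    by_cases h : c2 = 0
    · subst h
      by_cases h' : c1 = 0
      · subst h'
        have : c0 ≠ 0 := by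
          rintro rfl
          apply hx0
          rw [← hc]; simp
        apply cancel c0 _ this
        rw [← hc] at hx
        simpa using hx
      · apply cancel c1 _ h'
        simpa using hx1
    · exact cancel _ _ (mul_ne_zero h2 h) hx2
  have hCW : C ∈ W := by
    have := hg σ A hAW
    rw [σA] at this
    simpa using this
  have hBW : B ∈ W := by
    have := sub_mem (hn C hCW) hAW
    rw [τC] at this
    apply cancel 2 _ h2
    convert this using 1
    abel
  apply le_antisymm hW
  rw [L4_eq F b]
  refine Submodule.span_le.2 ?_
  rintro t (rfl | rfl | rfl) <;> assumption

end Aux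

theorem lie_power_four_dim_two
    (F V : Type*) [Field F] [AddCommGroup V] [Module F V]
    (h2 : ringChar F ≠ 2) (h3 : ringChar F ≠ 3)
    (hd : Module.finrank F V = 2) :
    -- a `GL(V)`-equivariant isomorphism `Λ²V ⊗ S²V ≅ L⁴V`
    (∃ e : ((⋀[F]^2 V) ⊗[F] (S2 F (V := V))) ≃ₗ[F] L4 F (V := V),
      ∀ (g : V ≃ₗ[F] V) (y : (⋀[F]^2 V) ⊗[F] (S2 F (V := V))),
        (e (TensorProduct.map (extPowMap F 2 g.toLinearMap) (S2map F g.toLinearMap) y)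
            : (V ⊗[F] V) ⊗[F] (V ⊗[F] V))
          = map4 F g.toLinearMap (e y)) ∧
    -- in particular `dim L⁴V = 3`
    Module.finrank F (L4 F (V := V)) = 3 ∧
    -- and `L⁴V` is an irreducible `GL(V)`-module
    (∀ W : Submodule F ((V ⊗[F] V) ⊗[F] (V ⊗[F] V)), W ≤ L4 F (V := V) →
      (∀ g : V ≃ₗ[F] V, ∀ x ∈ W, map4 F g.toLinearMap x ∈ W) →
      W = ⊥ ∨ W = L4 F (V := V)) := by
  have h2' : (2 : F) ≠ 0 := Ring.two_ne_zero h2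
  haveI : Module.Finite F V := Module.finite_of_finrank_pos (by omega)
  let b : Module.Basis (Fin 2) F V := Module.finBasisOfFinrankEq F V hd
  refine ⟨⟨(LinearEquiv.ofInjective (auxPhi F) (auxPhi_inj F h2' b)).trans
    (LinearEquiv.ofEq _ _ (auxPhi_range F h2' b)), ?_⟩, L4_finrank F b, L4_irred F h2' b⟩
  intro g y
  exact auxPhi_map F g.toLinearMap y
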